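/- Every tile of G = Z_p^2 × Z_q is a spectral set, where p and q are distinct primes. -/

import Mathlib

open Complex Finset

noncomputable def chiZp2 (p : ℕ) (a u : ZMod p × ZMod p) : ℂ :=
  Complex.exp (2 * Real.pi * Complex.I * (((u.1 * a.1 + u.2 * a.2 : ZMod p).val : ℂ) / p))

noncomputable def chiG (p q : ℕ) (l x : (ZMod p × ZMod p) × ZMod q) : ℂ :=
  chiZp2 p l.1 x.1 *
    Complex.exp (2 * Real.pi * Complex.I * (((x.2 * l.2 : ZMod q).val : ℂ) / q))

def IsSpectrum (p q : ℕ) [NeZero p] [NeZero q]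
    (S Λ : Finset ((ZMod p × ZMod p) × ZMod q)) : Prop :=
  Λ.card = S.card ∧ ∀ l ∈ Λ, ∀ l' ∈ Λ, l ≠ l' →
    ∑ x ∈ S, chiG p q l x * (starRingEnd ℂ) (chiG p q l' x) = 0

def IsSpectral (p q : ℕ) [NeZero p] [NeZero q]
    (S : Finset ((ZMod p × ZMod p) × ZMod q)) : Prop :=
  ∃ Λ, IsSpectrum p q S Λ

def Tiles (p q : ℕ) [NeZero p] [NeZero q]
    (S : Finset ((ZMod p × ZMod p) × ZMod q)) : Prop :=
  ∃ T : Finset ((ZMod p × ZMod p) × ZMod q),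
    S.card * T.card = Fintype.card ((ZMod p × ZMod p) × ZMod q) ∧
    ∀ g, ∃ s ∈ S, ∃ t ∈ T, s + t = g

/-!
Write `Ŝ(l) = ∑ x ∈ S, χ_l(x)`. A subgroup `L` is a spectrum of `A` as soon as `|L| = |A|` and `Â`
vanishes on `L \ {0}`. If `A + T = G` is a tiling, then `Â(l) * T̂(l) = 0` for `l ≠ 0`, so it is
enough that `T̂` has no zero on a subgroup `L` of order `|G| / |T|`. Such an `L = V × W`, with
`V ≤ Z_p^2` and `W` either `0` or `Z_q`, exists for every set `T` whose cardinality divides `p^2 q`.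
If `T̂` vanishes on all nonzero elements of a subgroup, then the order of that subgroup divides
`|T|`; this provides a `V` of the right order with `T̂(v, 0) ≠ 0` for `v ∈ V`, and settles all
cases but `|T| ≤ p`, `W = Z_q`. There, a zero `T̂(v, w) = 0` would imply by Galois conjugation
that `x ↦ ⟨v, x⟩` takes each value in `Z_p` exactly once on `T`, so that `T̂(v, 0) = 0` as well.
-/

section Equidistribution

variable {ι H R : Type*} [AddCommGroup H] [Fintype H] [CommSemiring R] [IsDomain R]

/- Fourier inversion on the dual of `H`: the push-forward of `F` along `e` has its Fourier transform
supported at `0`, so it is constant. -/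
theorem card_mul_sum_fiber_eq_sum (S : Finset ι) (e : ι → AddChar H R) (F : ι → R)
    (hF : ∀ h ≠ 0, ∑ x ∈ S, F x * e x h = 0) (c : AddChar H R) :
    Fintype.card H * ∑ x ∈ S with e x = c, F x = ∑ x ∈ S, F x := by
  classical
  calc Fintype.card H * ∑ x ∈ S with e x = c, F x
      = ∑ x ∈ S, F x * ∑ h, (e x - c) h := by
        simp [AddChar.sum_eq_ite, sub_eq_zero, sum_filter, mul_sum, mul_comm]
    _ = ∑ h, (∑ x ∈ S, F x * e x h) * c (-h) := by
        simp only [AddChar.sub_apply, mul_sum, sum_mul, mul_assoc]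
        exact sum_comm
    _ = ∑ x ∈ S, F x := by
        rw [Fintype.sum_eq_single 0 fun h hh ↦ by rw [hF h hh, zero_mul]]
        simp

theorem card_dvd_card_of_sum_eq_zero [CharZero R] (S : Finset ι) (e : ι → AddChar H R)
    (he : ∀ h ≠ 0, ∑ x ∈ S, e x h = 0) : Fintype.card H ∣ #S := by
  have hfiber := card_mul_sum_fiber_eq_sum S e 1 (by simpa using he) 0
  simp only [Pi.one_apply, sum_const, nsmul_eq_mul, mul_one] at hfiber
  exact Dvd.intro _ (by exact_mod_cast hfiber)

theorem sum_apply_eq_zero_of_card_le (S : Finset ι) (e : ι → AddChar H ℂ) (F : ι → ℂ)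
    (hF : ∀ h ≠ 0, ∑ x ∈ S, F x * e x h = 0) (hF₀ : ∑ x ∈ S, F x ≠ 0)
    (hS : #S ≤ Fintype.card H) {h : H} (hh : h ≠ 0) : ∑ x ∈ S, e x h = 0 := by
  have hsurj : Set.SurjOn e S (univ : Finset (AddChar H ℂ)) := by
    intro c _
    have hfiber := card_mul_sum_fiber_eq_sum S e F hF c
    obtain ⟨x, hx, -⟩ := exists_ne_zero_of_sum_ne_zero (right_ne_zero_of_mul (hfiber ▸ hF₀))
    exact ⟨x, by simpa using hx⟩
  have hinj : Set.InjOn e S :=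
    injOn_of_surjOn_of_card_le e (fun _ _ ↦ mem_univ _) hsurj (by simpa [AddChar.card_eq] using hS)
  rw [sum_nbij (t := univ) (g := fun c ↦ c h) e (fun _ _ ↦ mem_univ _) hinj hsurj fun _ _ ↦ rfl]
  exact AddChar.sum_apply_eq_zero_iff_ne_zero.2 hh

end Equidistribution

section RootsOfUnity

variable {ι : Type*} {S : Finset ι}

/- The Galois automorphism `μ ↦ μ ^ m` acts on the relation. -/
theorem sum_pow_eq_zero_of_coprime {R : Type*} [CommRing R] [IsDomain R] [CharZero R] {n m : ℕ}
    [NeZero n] {μ : R} (hμ : IsPrimitiveRoot μ n) (hm : m.Coprime n) {z : ι → R}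
    (hz : ∀ x, z x ^ n = 1) (hsum : ∑ x ∈ S, z x = 0) : ∑ x ∈ S, z x ^ m = 0 := by
  choose k _ hk using fun x ↦ hμ.eq_pow_of_pow_eq_one (hz x)
  let P : Polynomial ℤ := ∑ x ∈ S, Polynomial.X ^ k x
  have aeval_P (j : ℕ) : Polynomial.aeval (μ ^ j) P = ∑ x ∈ S, z x ^ j := by
    simp only [P, map_sum, map_pow, Polynomial.aeval_X, ← hk]
    exact sum_congr rfl fun x _ ↦ pow_right_comm μ j (k x)
  have hdvd : minpoly ℤ (μ ^ m) ∣ P := by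
    rw [← hμ.minpoly_eq_pow_coprime hm]
    refine minpoly.isIntegrallyClosed_dvd (hμ.isIntegral (NeZero.pos n)) ?_
    simpa [hsum] using aeval_P 1
  rw [← aeval_P, Polynomial.aeval_eq_zero_of_dvd_aeval_eq_zero hdvd (minpoly.aeval _ _)]

theorem addChar_apply_pow_eq_one {H R : Type*} {n : ℕ} [AddCommGroup H] [Module (ZMod n) H]
    [Monoid R] (e : AddChar H R) (h : H) : e h ^ n = 1 := by
  rw [← AddChar.map_nsmul_eq_pow, ZModModule.char_nsmul_eq_zero, AddChar.map_zero_eq_one]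

variable {p q : ℕ} [Fact p.Prime] [Fact q.Prime]

theorem sum_apply_smul_eq_zero {H : Type*} [AddCommGroup H] [Module (ZMod p) H]
    {e : ι → AddChar H ℂ} {h : H} (hsum : ∑ x ∈ S, e x h = 0) {k : ZMod p} (hk : k ≠ 0) :
    ∑ x ∈ S, e x (k • h) = 0 := by
  have hcop : k.val.Coprime p := by
    rw [← ZMod.isUnit_iff_coprime, ZMod.natCast_zmod_val]
    exact hk.isUnit
  rw [← sum_pow_eq_zero_of_coprime (Complex.isPrimitiveRoot_exp p (NeZero.ne p)) hcop
    (fun x ↦ addChar_apply_pow_eq_one (e x) h) hsum]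
  refine sum_congr rfl fun x _ ↦ ?_
  rw [← AddChar.map_nsmul_eq_pow, ← Nat.cast_smul_eq_nsmul (ZMod p), ZMod.natCast_zmod_val]

theorem prime_dvd_card_of_sum_eq_zero {z : ι → ℂ} (hz : ∀ x, z x ^ p = 1)
    (hsum : ∑ x ∈ S, z x = 0) : p ∣ #S := by
  let e (x : ι) : AddChar (ZMod p) ℂ := AddChar.zmodChar p (hz x)
  have he : ∑ x ∈ S, e x 1 = 0 := by
    simpa [e, AddChar.zmodChar_apply, ZMod.val_one] using hsum
  simpa [ZMod.card] using card_dvd_card_of_sum_eq_zero S e fun k hk ↦ by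
    simpa using sum_apply_smul_eq_zero he hk

/- By Galois conjugation and equidistribution each of the `p`-th roots of unity is attained by `y`,
hence exactly once because `#S ≤ p`. -/
theorem sum_eq_zero_of_sum_mul_eq_zero_of_card_le (hpq : p ≠ q) {y z : ι → ℂ}
    (hy : ∀ x, y x ^ p = 1) (hz : ∀ x, z x ^ q = 1) (hSq : ¬q ∣ #S) (hSp : #S ≤ p)
    (hsum : ∑ x ∈ S, y x * z x = 0) : ∑ x ∈ S, y x = 0 := by
  have hcop : p.Coprime q := (Nat.coprime_primes Fact.out Fact.out).2 hpq
  have hconj (k : ZMod p) (hk : k ≠ 0) : ∑ x ∈ S, z x * y x ^ k.val = 0 := by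
    obtain ⟨m, hmp, hmq⟩ := Nat.chineseRemainder hcop k.val 1
    have hm : m.Coprime (p * q) := by
      refine Nat.Coprime.mul_right ?_ ?_
      · rw [← ZMod.isUnit_iff_coprime, (ZMod.natCast_eq_natCast_iff _ _ _).2 hmp,
          ZMod.natCast_zmod_val]
        exact hk.isUnit
      · rw [← ZMod.isUnit_iff_coprime, (ZMod.natCast_eq_natCast_iff _ _ _).2 hmq]
        simp
    have hyz (x : ι) : (y x * z x) ^ (p * q) = 1 := by
      rw [mul_pow, pow_mul, hy, one_pow, mul_comm p, pow_mul, hz, one_pow, one_mul]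
    rw [← sum_pow_eq_zero_of_coprime
      (Complex.isPrimitiveRoot_exp (p * q) (NeZero.ne _)) hm hyz hsum]
    refine sum_congr rfl fun x _ ↦ ?_
    rw [mul_pow, pow_eq_pow_of_modEq hmp (hy x), pow_eq_pow_of_modEq hmq (hz x), pow_one, mul_comm]
  have hz₀ : ∑ x ∈ S, z x ≠ 0 := fun h ↦ hSq (prime_dvd_card_of_sum_eq_zero hz h)
  have hvalue := sum_apply_eq_zero_of_card_le S (fun x ↦ AddChar.zmodChar p (hy x)) z
    (by simpa only [AddChar.zmodChar_apply] using hconj) hz₀ (by rwa [ZMod.card]) one_ne_zero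
  simpa only [AddChar.zmodChar_apply, ZMod.val_one, pow_one] using hvalue

end RootsOfUnity

section NonvanishingSubgroup

variable {ι P Q : Type*} {p q : ℕ} [Fact p.Prime] [Fact q.Prime] [AddCommGroup P]
  [Module (ZMod p) P] [AddCommGroup Q] [Module (ZMod q) Q] {S : Finset ι}

theorem exists_line_forall_sum_ne_zero [Finite P] {e : ι → AddChar P ℂ}
    (hS : ¬Nat.card P ∣ #S) :
    ∃ V : Submodule (ZMod p) P, Nat.card V = p ∧ ∀ v ∈ V, ∑ x ∈ S, e x v ≠ 0 := by
  have := Fintype.ofFinite P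
  obtain ⟨v, hv, hsum⟩ : ∃ v ≠ 0, ∑ x ∈ S, e x v ≠ 0 := by
    by_contra! h
    exact hS (Nat.card_eq_fintype_card (α := P) ▸ card_dvd_card_of_sum_eq_zero S e h)
  refine ⟨Submodule.span (ZMod p) {v}, ?_, fun w hw hw₀ ↦ ?_⟩
  · rw [← Nat.card_congr (LinearEquiv.toSpanNonzeroSingleton (ZMod p) P v hv).toEquiv,
      Nat.card_zmod]
  obtain ⟨k, rfl⟩ := Submodule.mem_span_singleton.1 hw
  obtain rfl | hk := eq_or_ne k 0
  · have : S = ∅ := by simpa using hw₀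
    simp [this] at hsum
  · exact hsum (by simpa [smul_smul, hk] using sum_apply_smul_eq_zero hw₀ (inv_ne_zero hk))

theorem exists_submodule_forall_sum_ne_zero (hP : Nat.card P = p ^ 2) {e : ι → AddChar P ℂ}
    {a : ℕ} (ha : a ≤ 2) (hS : ¬p ^ (a + 1) ∣ #S) :
    ∃ V : Submodule (ZMod p) P, Nat.card V * p ^ a = p ^ 2 ∧ ∀ v ∈ V, ∑ x ∈ S, e x v ≠ 0 := by
  have : Finite P := Nat.finite_of_card_ne_zero (by simp [hP, NeZero.ne p])
  interval_cases a
  · refine ⟨⊤, by simp [hP], fun v _ hv ↦ hS ?_⟩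
    simpa using prime_dvd_card_of_sum_eq_zero (fun x ↦ addChar_apply_pow_eq_one (e x) v) hv
  · obtain ⟨V, hV, hV₀⟩ := exists_line_forall_sum_ne_zero (p := p) (e := e) (hP ▸ hS)
    exact ⟨V, by rw [hV, pow_one, sq], hV₀⟩
  · refine ⟨⊥, by simp, ?_⟩
    rintro v rfl hv
    have : S = ∅ := by simpa using hv
    simp [this] at hS

theorem exists_submodule_forall_sum_prod_ne_zero (hpq : p ≠ q) (hP : Nat.card P = p ^ 2)
    {e : ι → AddChar (P × Q) ℂ} (hS : #S ∣ p ^ 2) :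
    ∃ V : Submodule (ZMod p) P,
      Nat.card V * #S = p ^ 2 ∧ ∀ v ∈ V, ∀ w, ∑ x ∈ S, e x (v, w) ≠ 0 := by
  have hp : p.Prime := Fact.out
  obtain ⟨a, ha, hSa⟩ := (Nat.dvd_prime_pow hp).1 hS
  have hSq : ¬q ∣ #S := fun h ↦
    hpq ((Nat.prime_dvd_prime_iff_eq Fact.out hp).1
      ((Fact.out : q.Prime).dvd_of_dvd_pow (h.trans hS))).symm
  let eP (x : ι) : AddChar P ℂ := (e x).compAddMonoidHom (.inl P Q)
  let eQ (x : ι) : AddChar Q ℂ := (e x).compAddMonoidHom (.inr P Q)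
  have hmul (x : ι) (v : P) (w : Q) : e x (v, w) = eP x v * eQ x w := by
    simp [eP, eQ, ← AddChar.map_add_eq_mul]
  obtain ⟨V, hV, hV₀⟩ := exists_submodule_forall_sum_ne_zero hP (e := eP) ha
    (by rw [hSa, Nat.pow_dvd_pow_iff_le_right hp.one_lt]; lia)
  refine ⟨V, hSa ▸ hV, fun v hv w hsum ↦ ?_⟩
  simp only [hmul] at hsum
  obtain ha₁ | rfl : a ≤ 1 ∨ a = 2 := by lia
  · have hSp : #S ≤ p := hSa ▸ (Nat.pow_le_pow_right hp.pos ha₁).trans_eq (pow_one p)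
    exact hV₀ v hv (sum_eq_zero_of_sum_mul_eq_zero_of_card_le hpq
      (fun x ↦ addChar_apply_pow_eq_one (eP x) v) (fun x ↦ addChar_apply_pow_eq_one (eQ x) w)
      hSq hSp hsum)
  · have hV_card : Nat.card V.toAddSubgroup = 1 :=
      Nat.eq_of_mul_eq_mul_right (pow_pos hp.pos 2) (hV.trans (one_mul _).symm)
    obtain rfl : v = 0 := AddSubgroup.mem_bot.1 (AddSubgroup.card_eq_one.1 hV_card ▸ hv)
    simp only [AddChar.map_zero_eq_one, one_mul] at hsum
    exact hSq (prime_dvd_card_of_sum_eq_zero (fun x ↦ addChar_apply_pow_eq_one (eQ x) w) hsum)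

theorem exists_addSubgroup_forall_sum_ne_zero (hpq : p ≠ q) (hP : Nat.card P = p ^ 2)
    (hQ : Nat.card Q = q) (e : ι → AddChar (P × Q) ℂ) (hS : #S ∣ p ^ 2 * q) :
    ∃ L : AddSubgroup (P × Q),
      Nat.card L * #S = p ^ 2 * q ∧ ∀ l ∈ L, ∑ x ∈ S, e x l ≠ 0 := by
  have hp : p.Prime := Fact.out
  have hq : q.Prime := Fact.out
  have card_prod (V : Submodule (ZMod p) P) (W : AddSubgroup Q) :
      Nat.card (V.toAddSubgroup.prod W) = Nat.card V * Nat.card W := by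
    rw [Nat.card_congr (AddSubgroup.prodEquiv _ _).toEquiv, Nat.card_prod]
    rfl
  by_cases hSq : q ∣ #S
  · obtain ⟨m, hm⟩ := hSq
    rw [hm, mul_comm, Nat.mul_dvd_mul_iff_right hq.pos, Nat.dvd_prime_pow hp] at hS
    obtain ⟨a, ha, rfl⟩ := hS
    have hSp : ¬p ^ (a + 1) ∣ #S := by
      rw [hm, pow_succ', Nat.mul_dvd_mul_iff_right (pow_pos hp.pos a)]
      exact fun h ↦ hpq ((Nat.prime_dvd_prime_iff_eq hp hq).1 h)
    obtain ⟨V, hV, hV₀⟩ := exists_submodule_forall_sum_ne_zero hP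
      (e := fun x ↦ (e x).compAddMonoidHom (.inl P Q)) ha hSp
    refine ⟨V.toAddSubgroup.prod ⊥, by rw [card_prod, hm, ← hV, AddSubgroup.card_bot]; ring, ?_⟩
    rintro ⟨v, w⟩ ⟨hv, rfl : w = 0⟩
    exact hV₀ v hv
  · have hSp : #S ∣ p ^ 2 := ((hq.coprime_iff_not_dvd.2 hSq).symm).dvd_of_dvd_mul_right hS
    obtain ⟨V, hV, hV₀⟩ := exists_submodule_forall_sum_prod_ne_zero hpq hP (e := e) hSp
    refine ⟨V.toAddSubgroup.prod ⊤, by rw [card_prod, AddSubgroup.card_top, hQ, ← hV]; ring, ?_⟩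
    rintro ⟨v, w⟩ ⟨hv, -⟩
    exact hV₀ v hv w

end NonvanishingSubgroup

section Tiling

open scoped Pointwise

theorem sum_mul_sum_eq_zero_of_add_eq_univ {G R : Type*} [AddCommGroup G] [Fintype G]
    [DecidableEq G] [CommSemiring R] [IsDomain R] {A T : Finset G} (hAT : A + T = univ)
    (hcard : #A * #T = Fintype.card G) {ψ : AddChar G R} (hψ : ψ ≠ 0) :
    (∑ x ∈ A, ψ x) * ∑ x ∈ T, ψ x = 0 := by
  classical
  have hinj : Set.InjOn (fun x : G × G ↦ x.1 + x.2) (A ×ˢ T : Finset (G × G)) := by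
    rw [coe_product, ← card_add_iff, hAT, hcard, card_univ]
  calc (∑ x ∈ A, ψ x) * ∑ x ∈ T, ψ x
      = ∑ x ∈ A ×ˢ T, ψ (x.1 + x.2) := by
        simp only [sum_mul_sum, sum_product, AddChar.map_add_eq_mul]
    _ = ∑ g, ψ g := by rw [← hAT, ← image_add_product, sum_image hinj]
    _ = 0 := by rw [AddChar.sum_eq_ite, if_neg hψ]

end Tiling

section ConcreteCharacters

variable (p q : ℕ) [NeZero p] [NeZero q]

theorem chiG_eq_stdAddChar_mul (l x : (ZMod p × ZMod p) × ZMod q) :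
    chiG p q l x =
      ZMod.stdAddChar (x.1.1 * l.1.1 + x.1.2 * l.1.2) * ZMod.stdAddChar (x.2 * l.2) := by
  simp only [chiG, chiZp2, ZMod.stdAddChar_apply, ZMod.toCircle_apply, mul_div_assoc]

theorem chiG_comm (l x : (ZMod p × ZMod p) × ZMod q) : chiG p q l x = chiG p q x l := by
  simp only [chiG_eq_stdAddChar_mul, mul_comm]

/-- The character `χ_l` of `(ZMod p × ZMod p) × ZMod q`, bundled as an `AddChar` in the point. As
`chiG` is symmetric, `chiGAddChar p q x` is also the evaluation `l ↦ χ_l(x)` on the dual group. -/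
noncomputable def chiGAddChar (l : (ZMod p × ZMod p) × ZMod q) :
    AddChar ((ZMod p × ZMod p) × ZMod q) ℂ where
  toFun := chiG p q l
  map_zero_eq_one' := by simp [chiG_eq_stdAddChar_mul]
  map_add_eq_mul' x y := by
    rw [chiG_eq_stdAddChar_mul, chiG_eq_stdAddChar_mul, chiG_eq_stdAddChar_mul, mul_mul_mul_comm,
      ← AddChar.map_add_eq_mul, ← AddChar.map_add_eq_mul]
    congr 2
    · simp only [Prod.fst_add, Prod.snd_add]
      ring
    · simp only [Prod.snd_add, add_mul]

theorem chiGAddChar_apply (l x : (ZMod p × ZMod p) × ZMod q) :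
    chiGAddChar p q l x = chiG p q l x := rfl

theorem chiGAddChar_ne_zero {l : (ZMod p × ZMod p) × ZMod q} (hl : l ≠ 0) :
    chiGAddChar p q l ≠ 0 := by
  contrapose! hl
  have hchi (x : (ZMod p × ZMod p) × ZMod q) : chiG p q l x = 1 := DFunLike.congr_fun hl x
  have eq_zero {n : ℕ} [NeZero n] {j : ZMod n} (hj : (ZMod.stdAddChar j : ℂ) = 1) : j = 0 :=
    AddChar.injective_iff.1 ZMod.injective_stdAddChar hj
  simp only [chiG_eq_stdAddChar_mul] at hchi
  refine Prod.ext (Prod.ext ?_ ?_) ?_ <;> apply eq_zero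
  · simpa using hchi ((1, 0), 0)
  · simpa using hchi ((0, 1), 0)
  · simpa using hchi ((0, 0), 1)

theorem chiG_mul_conj_chiG (l l' x : (ZMod p × ZMod p) × ZMod q) :
    chiG p q l x * (starRingEnd ℂ) (chiG p q l' x) = chiG p q (l - l') x := by
  rw [chiG_comm p q l, chiG_comm p q l', chiG_comm p q (l - l')]
  simp only [← chiGAddChar_apply]
  rw [sub_eq_add_neg, AddChar.map_add_eq_mul, AddChar.map_neg_eq_conj]

theorem isSpectral_of_addSubgroup {A : Finset ((ZMod p × ZMod p) × ZMod q)}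
    (L : AddSubgroup ((ZMod p × ZMod p) × ZMod q)) (hL : Nat.card L = #A)
    (hA : ∀ l ∈ L, l ≠ 0 → ∑ x ∈ A, chiG p q l x = 0) : IsSpectral p q A := by
  classical
  refine ⟨({l | l ∈ L} : Finset _), ?_, fun l hl l' hl' hne ↦ ?_⟩
  · rw [← hL, Nat.card_eq_fintype_card, Fintype.card_subtype]
  · simp only [mem_filter_univ] at hl hl'
    simpa only [chiG_mul_conj_chiG] using hA _ (L.sub_mem hl hl') (sub_ne_zero.2 hne)

theorem sum_chiG_mul_sum_chiG_eq_zero_of_tiling {A T : Finset ((ZMod p × ZMod p) × ZMod q)}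
    (hcard : #A * #T = Fintype.card ((ZMod p × ZMod p) × ZMod q))
    (hAT : ∀ g, ∃ s ∈ A, ∃ t ∈ T, s + t = g) {l : (ZMod p × ZMod p) × ZMod q} (hl : l ≠ 0) :
    (∑ x ∈ A, chiG p q l x) * ∑ x ∈ T, chiG p q l x = 0 :=
  sum_mul_sum_eq_zero_of_add_eq_univ (eq_univ_iff_forall.2 fun g ↦ mem_add.2 (hAT g)) hcard
    (chiGAddChar_ne_zero p q hl)

end ConcreteCharacters

theorem tile_implies_spectral (p q : ℕ) [Fact p.Prime] [Fact q.Prime] (hpq : p ≠ q)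
    (A : Finset ((ZMod p × ZMod p) × ZMod q)) (hA : Tiles p q A) :
    IsSpectral p q A := by
  obtain ⟨T, hcard, hAT⟩ := hA
  have hG : Fintype.card ((ZMod p × ZMod p) × ZMod q) = p ^ 2 * q := by simp [ZMod.card, sq]
  obtain ⟨L, hL, hL₀⟩ := exists_addSubgroup_forall_sum_ne_zero hpq (by simp [sq])
    (Nat.card_zmod q) (chiGAddChar p q) (S := T) (hG ▸ Dvd.intro_left _ hcard)
  refine isSpectral_of_addSubgroup p q L ?_ fun l hl hl₀ ↦ ?_
  · have hT : 0 < #T := Nat.pos_of_mul_pos_left (hcard ▸ Fintype.card_pos)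
    exact Nat.eq_of_mul_eq_mul_right hT (by rw [hL, hcard, hG])
  · have hT : ∑ x ∈ T, chiG p q l x ≠ 0 := by
      simpa only [chiGAddChar_apply, chiG_comm p q l] using hL₀ l hl
    exact (mul_eq_zero.1 (sum_chiG_mul_sum_chiG_eq_zero_of_tiling p q hcard hAT hl₀)).resolve_right
      hT
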